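/- arXiv:2107.01680 — 2 statements merged into one kernel-verified Lean document; each statement's English description precedes it below -/
import Mathlib

section
/- For every q with 1 ≤ q ≤ 2, the function φ(z₁,z₂) = (z₁+z₂)/√2 on 𝕋² satisfies ‖φ‖_{H^q(𝕋²)}^{-1} ≥ 1 + ((2·log 2 − 1)/8)·(2 − q). -/
/-!
Write `φ = (z₁ + z₂)/√2`. By translation invariance, integrating a function of `‖z₁ + z₂‖` over the
torus amounts to integrating it along `‖1 + e(t)‖ = 2 cos (π t)`, `t ∈ [-1/2, 1/2]`. This gives the
two moments `∫ ‖φ‖ = 2√2/π` and `∫ ‖φ‖² = 1`.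

For `1 ≤ q ≤ 2`, weighted AM-GM gives `y ^ q ≤ (q - 1) y² + (2 - q) y`, hence
`∫ ‖φ‖ ^ q ≤ 1 - (2 - q) (1 - 2√2/π)`. Numerically `1 - 2√2/π ≈ 0.0997` exceeds
`2κ ≈ 0.0966`, where `κ = (2 log 2 - 1)/8`, so `∫ ‖φ‖ ^ q ≤ 1 - q x ≤ exp (-q x)` with
`x = κ (2 - q)`. Taking `q`-th roots, `‖φ‖_q⁻¹ ≥ exp x ≥ 1 + x`.
-/

open MeasureTheory Complex Finset Filter
open scoped ENNReal Real ComplexConjugate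

noncomputable section

abbrev Torus (d : ℕ) := Fin d → AddCircle (1 : ℝ)

/-- Functions of `‖e(x) + e(y)‖` integrate over the two-dimensional torus as a one-dimensional
integral, by translation invariance in the second variable. -/
lemma integral_norm_fourier_add (G : ℝ → ℝ) (hG : Continuous G) :
    ∫ z : Torus 2, G ‖(fourier 1 (z 0) + fourier 1 (z 1) : ℂ)‖ =
      ∫ t in (-1 / 2 : ℝ)..(1 / 2), G (2 * Real.cos (π * t)) := by
  have hone : (volume : Measure (AddCircle (1 : ℝ))).real Set.univ = 1 := by
    simp [Measure.real, AddCircle.measure_univ]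
  have h1 : ∫ z : Torus 2, G ‖(fourier 1 (z 0) + fourier 1 (z 1) : ℂ)‖ =
      ∫ p : AddCircle (1 : ℝ) × AddCircle (1 : ℝ),
        G ‖(fourier 1 p.1 + fourier 1 p.2 : ℂ)‖ :=
    (volume_preserving_finTwoArrow (AddCircle (1 : ℝ))).integral_comp
      (MeasurableEquiv.measurableEmbedding _)
      (fun p : AddCircle (1 : ℝ) × AddCircle (1 : ℝ) =>
        G ‖(fourier 1 p.1 + fourier 1 p.2 : ℂ)‖)
  have hcont : Continuous fun p : AddCircle (1 : ℝ) × AddCircle (1 : ℝ) =>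
        G ‖(fourier 1 p.1 + fourier 1 p.2 : ℂ)‖ := by fun_prop
  have hint : Integrable (fun p : AddCircle (1 : ℝ) × AddCircle (1 : ℝ) =>
        G ‖(fourier 1 p.1 + fourier 1 p.2 : ℂ)‖) (volume.prod volume) :=
    hcont.integrable_of_hasCompactSupport (HasCompactSupport.of_compactSpace _)
  have h2 : ∀ x : AddCircle (1 : ℝ), ∫ y : AddCircle (1 : ℝ),
      G ‖(fourier 1 x + fourier 1 y : ℂ)‖ =
      ∫ y : AddCircle (1 : ℝ), G ‖(1 + fourier 1 y : ℂ)‖ := by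
    intro x
    rw [← integral_add_left_eq_self _ x]
    refine integral_congr_ae (Eventually.of_forall fun y => ?_)
    have hx : ‖(fourier 1 x : ℂ)‖ = 1 := by
      rw [fourier_apply]
      exact Circle.norm_coe _
    have : (fourier 1 x + fourier 1 (x + y) : ℂ) = fourier 1 x * (1 + fourier 1 y) := by
      simp only [fourier_one, AddCircle.toCircle_add, Circle.coe_mul]
      ring
    simp only [this, norm_mul, hx, one_mul]
  rw [h1, Measure.volume_eq_prod, integral_prod _ hint]
  simp only [h2, integral_const, hone, one_smul]
  rw [← AddCircle.intervalIntegral_preimage (1 : ℝ) (-1 / 2)]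
  have e : (-1 / 2 + 1 : ℝ) = 1 / 2 := by norm_num
  rw [e]
  refine intervalIntegral.integral_congr fun t ht => ?_
  rw [Set.uIcc_of_le (by norm_num)] at ht
  have hc : 0 ≤ Real.cos (π * t) :=
    Real.cos_nonneg_of_mem_Icc ⟨by nlinarith [ht.1, Real.pi_pos], by nlinarith [ht.2, Real.pi_pos]⟩
  have hexp : (1 + fourier 1 (t : AddCircle (1 : ℝ)) : ℂ)
      = Complex.exp (((π * t : ℝ) : ℂ) * I) * ((2 * Real.cos (π * t) : ℝ) : ℂ) := by
    rw [fourier_coe_apply]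
    push_cast
    rw [Complex.two_cos, mul_add, ← Complex.exp_add, ← Complex.exp_add, add_comm]
    congr 1
    · congr 1; ring
    · rw [← Complex.exp_zero]; congr 1; ring
  simp only [hexp, norm_mul, Complex.norm_exp_ofReal_mul_I, one_mul, Complex.norm_real,
    Real.norm_eq_abs, abs_of_nonneg hc, abs_two]

/-- Interpolation between the exponents `1` and `2`. -/
lemma rpow_le_interp {q y : ℝ} (hq1 : 1 ≤ q) (hq2 : q ≤ 2) (hy : 0 ≤ y) :
    y ^ q ≤ (q - 1) * y ^ 2 + (2 - q) * y := by
  have h := Real.geom_mean_le_arith_mean2_weighted (w₁ := q - 1) (w₂ := 2 - q) (p₁ := y ^ 2)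
    (p₂ := y) (by linarith) (by linarith) (by positivity) hy (by ring)
  rcases hy.eq_or_lt with rfl | hy
  · rw [Real.zero_rpow (by linarith)]; simp
  · rwa [← Real.rpow_natCast, ← Real.rpow_mul hy.le, ← Real.rpow_add hy,
      show ((2 : ℕ) : ℝ) * (q - 1) + (2 - q) = q by push_cast; ring, Real.rpow_natCast] at h

lemma integral_cos_pi : ∫ t in (-1 / 2 : ℝ)..(1 / 2), 2 * Real.cos (π * t) = 4 / π := by
  rw [intervalIntegral.integral_const_mul,
    intervalIntegral.integral_comp_mul_left (fun t => Real.cos t) Real.pi_ne_zero, integral_cos,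
    show π * (1 / 2) = π / 2 by ring, show π * (-1 / 2) = -(π / 2) by ring, Real.sin_neg,
    Real.sin_pi_div_two, smul_eq_mul]
  field_simp
  norm_num

lemma integral_cos_pi_sq :
    ∫ t in (-1 / 2 : ℝ)..(1 / 2), (2 * Real.cos (π * t)) ^ 2 = 2 := by
  simp only [mul_pow]
  rw [intervalIntegral.integral_const_mul,
    intervalIntegral.integral_comp_mul_left (fun t => Real.cos t ^ 2) Real.pi_ne_zero,
    integral_cos_sq,
    show π * (1 / 2) = π / 2 by ring, show π * (-1 / 2) = -(π / 2) by ring, Real.sin_neg,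
    Real.cos_neg, Real.sin_pi_div_two, Real.cos_pi_div_two, smul_eq_mul]
  field_simp
  norm_num
  ring

/-- The numerical inequality `2κ ≤ 1 - ‖φ‖₁` with `κ = (2 log 2 - 1)/8`. -/
lemma numeric_gap : (2 * Real.log 2 - 1) / 4 ≤ 1 - 4 / π / Real.sqrt 2 := by
  have hs : (1.414 : ℝ) ≤ Real.sqrt 2 := Real.le_sqrt_of_sq_le (by norm_num)
  have hp := Real.pi_gt_d2
  have hl := Real.log_two_lt_d9
  have : 4 / π / Real.sqrt 2 ≤ 0.902 := by
    rw [div_div, div_le_iff₀ (by positivity)]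
    nlinarith
  linarith

/-- For `1 ≤ q ≤ 2`, the function `φ(z) = (z₁+z₂)/√2` on `𝕋²` satisfies
`‖φ‖_{H^q(𝕋²)}⁻¹ ≥ 1 + ((2 log 2 − 1)/8)·(2 − q)`. -/
theorem inv_eLpNorm_lower_bound (q : ℝ) (hq1 : 1 ≤ q) (hq2 : q ≤ 2) :
    1 + (2 * Real.log 2 - 1) / 8 * (2 - q) ≤
      ((eLpNorm (fun z : Torus 2 => (fourier 1 (z 0) + fourier 1 (z 1)) / (Real.sqrt 2 : ℂ))
        (ENNReal.ofReal q) volume).toReal)⁻¹ := by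
  set f : Torus 2 → ℂ := fun z => (fourier 1 (z 0) + fourier 1 (z 1)) / (Real.sqrt 2 : ℂ) with hf
  have hfc : Continuous f := by fun_prop
  have hq0 : 0 < q := by linarith
  have hnorm : ∀ z, ‖f z‖ = ‖(fourier 1 (z 0) + fourier 1 (z 1) : ℂ)‖ / Real.sqrt 2 := by
    intro z
    simp [hf, abs_of_nonneg (Real.sqrt_nonneg 2)]
  have hI1 : ∫ z, ‖f z‖ = 4 / π / Real.sqrt 2 := by
    simp only [hnorm]
    rw [integral_norm_fourier_add (fun y => y / Real.sqrt 2) (by fun_prop),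
      intervalIntegral.integral_div, integral_cos_pi]
  have hI2 : ∫ z, ‖f z‖ ^ 2 = 1 := by
    simp only [hnorm]
    rw [integral_norm_fourier_add (fun y => (y / Real.sqrt 2) ^ 2) (by fun_prop)]
    simp only [div_pow]
    rw [intervalIntegral.integral_div, integral_cos_pi_sq, Real.sq_sqrt (by norm_num)]
    norm_num
  have hint : ∀ {g : Torus 2 → ℝ}, Continuous g → Integrable g := fun hg =>
    hg.integrable_of_hasCompactSupport (HasCompactSupport.of_compactSpace _)
  have hcq : Continuous fun z => ‖f z‖ ^ q :=
    hfc.norm.rpow_const fun _ => Or.inr hq0.le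
  have hmem : MemLp f (ENNReal.ofReal q) volume :=
    hfc.memLp_of_hasCompactSupport (HasCompactSupport.of_compactSpace _)
  have hnormq : (eLpNorm f (ENNReal.ofReal q) volume).toReal = (∫ z, ‖f z‖ ^ q) ^ q⁻¹ := by
    rw [hmem.eLpNorm_eq_integral_rpow_norm (by simpa using hq0) ENNReal.ofReal_ne_top,
      ENNReal.toReal_ofReal hq0.le, ENNReal.toReal_ofReal (by positivity)]
  have hle : ∫ z, ‖f z‖ ^ q ≤ (q - 1) * 1 + (2 - q) * (4 / π / Real.sqrt 2) := by
    have hsum : ∫ z, ((q - 1) * ‖f z‖ ^ 2 + (2 - q) * ‖f z‖) =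
        (q - 1) * 1 + (2 - q) * (4 / π / Real.sqrt 2) := by
      rw [integral_add (hint (by fun_prop)) (hint (by fun_prop)), integral_const_mul,
        integral_const_mul, hI1, hI2]
    rw [← hsum]
    exact integral_mono (hint hcq) (hint (by fun_prop))
      fun z => rpow_le_interp hq1 hq2 (norm_nonneg _)
  -- Positivity matters because `0⁻¹ = 0`: a vanishing norm would contradict the second moment.
  have hpos : 0 < ∫ z, ‖f z‖ ^ q := by
    refine lt_of_le_of_ne (integral_nonneg fun z => by positivity) fun h0 => ?_
    have hae := (integral_eq_zero_iff_of_nonneg (fun z => by positivity) (hint hcq)).1 h0.symm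
    have : ∫ z, ‖f z‖ ^ 2 = 0 := by
      refine integral_eq_zero_of_ae ?_
      filter_upwards [hae] with z hz
      have := (Real.rpow_eq_zero (norm_nonneg _) hq0.ne').1 hz
      simp [this]
    linarith
  set x := (2 * Real.log 2 - 1) / 8 * (2 - q) with hx
  have hκ : 0 ≤ 2 * Real.log 2 - 1 := by linarith [Real.log_two_gt_d9]
  have hexp : ∫ z, ‖f z‖ ^ q ≤ Real.exp (-x * q) := by
    have h1 := Real.add_one_le_exp (-x * q)
    have h2 := mul_le_mul_of_nonneg_left numeric_gap (by linarith : 0 ≤ 2 - q)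
    have h3 : x * q ≤ x * 2 :=
      mul_le_mul_of_nonneg_left hq2 (mul_nonneg (by linarith) (by linarith))
    have h4 : x * 2 = (2 - q) * ((2 * Real.log 2 - 1) / 4) := by rw [hx]; ring
    linarith
  have hroot : (∫ z, ‖f z‖ ^ q) ^ q⁻¹ ≤ Real.exp (-x) := by
    calc (∫ z, ‖f z‖ ^ q) ^ q⁻¹ ≤ (Real.exp (-x * q)) ^ q⁻¹ :=
          Real.rpow_le_rpow hpos.le hexp (by positivity)
      _ = Real.exp (-x) := by
          rw [← Real.exp_mul, mul_assoc, mul_inv_cancel₀ hq0.ne', mul_one]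
  rw [hnormq]
  calc 1 + x ≤ Real.exp x := by linarith [Real.add_one_le_exp x]
    _ = (Real.exp (-x))⁻¹ := by rw [Real.exp_neg, inv_inv]
    _ ≤ _ := inv_anti₀ (Real.rpow_pos_of_pos hpos _) hroot

end
end

section
/- The polynomial f(z₁,z₂) = z₁² + z₁z₂ + z₂² on 𝕋² satisfies ‖f‖_{H¹(𝕋²)} = ∫_{𝕋²} |f| = 1/3 + 2√3/π. -/
/-!
On the torus, dividing `z₁² + z₁z₂ + z₂²` by the unimodular `z₁z₂` leaves `w + 1 + w̄` with
`w = z₁ / z₂`, so the modulus is `|1 + 2 Re w|`. Translation and reflection invariance of Haar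
measure reduce the double integral to `∫ |1 + 2 cos 2πt| dt` over one period, taken as
`[-1/3, 2/3]`: the integrand changes sign only at `t = 1/3` there.
-/

open MeasureTheory Complex Finset Filter
open scoped ENNReal Real ComplexConjugate

noncomputable section

/-- For unimodular `a` and `b`, the quadratic form depends, in modulus, only on `a / b = a b̄`. -/
lemma norm_quadratic_of_norm_one (a b : ℂ) (ha : ‖a‖ = 1) (hb : ‖b‖ = 1) :
    ‖a ^ 2 + a * b + b ^ 2‖ = |1 + 2 * (a * conj b).re| := by
  have ha' : a * conj a = 1 := by rw [Complex.mul_conj, Complex.normSq_eq_norm_sq, ha]; simp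
  have hb' : b * conj b = 1 := by rw [Complex.mul_conj, Complex.normSq_eq_norm_sq, hb]; simp
  have hre : ((1 + 2 * (a * conj b).re : ℝ) : ℂ) = 1 + (a * conj b + conj a * b) := by
    have h := Complex.add_conj (a * conj b)
    rw [map_mul, Complex.conj_conj] at h
    rw [h]
    push_cast
    ring
  have key : a ^ 2 + a * b + b ^ 2 = a * b * ((1 + 2 * (a * conj b).re : ℝ) : ℂ) := by
    rw [hre]
    linear_combination (-a ^ 2) * hb' - b ^ 2 * ha'
  rw [key, norm_mul, norm_mul, ha, hb, Complex.norm_real, Real.norm_eq_abs]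
  ring

lemma norm_quadratic_fourier (x y : AddCircle (1 : ℝ)) :
    ‖(fourier 1 x) ^ 2 + fourier 1 x * fourier 1 y + (fourier 1 y) ^ 2‖
      = |1 + 2 * (fourier 1 (x - y) : ℂ).re| := by
  rw [norm_quadratic_of_norm_one _ _ (by rw [fourier_one, Circle.norm_coe])
    (by rw [fourier_one, Circle.norm_coe])]
  congr 4
  simp only [fourier_one, sub_eq_add_neg, AddCircle.toCircle_add, AddCircle.toCircle_neg,
    Circle.coe_mul, Circle.coe_inv_eq_conj]

lemma one_add_two_cos_nonneg {t : ℝ} (h₁ : -(1 / 3) ≤ t) (h₂ : t ≤ 1 / 3) :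
    0 ≤ 1 + 2 * Real.cos (2 * π * t) := by
  have hpi := Real.pi_pos
  have h := Real.cos_le_cos_of_nonneg_of_le_pi (x := |2 * π * t|) (y := π - π / 3) (abs_nonneg _)
    (by linarith) (abs_le.2 ⟨by nlinarith, by nlinarith⟩)
  rw [Real.cos_abs, Real.cos_pi_sub, Real.cos_pi_div_three] at h
  linarith

lemma one_add_two_cos_nonpos {t : ℝ} (h₁ : 1 / 3 ≤ t) (h₂ : t ≤ 2 / 3) :
    1 + 2 * Real.cos (2 * π * t) ≤ 0 := by
  have hpi := Real.pi_pos
  have h := Real.cos_le_cos_of_nonneg_of_le_pi (x := |2 * π * t - π|) (y := π / 3) (abs_nonneg _)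
    (by linarith) (abs_le.2 ⟨by nlinarith, by nlinarith⟩)
  rw [Real.cos_abs, Real.cos_sub_pi, Real.cos_pi_div_three] at h
  linarith

lemma integral_one_add_two_cos (a b : ℝ) :
    ∫ t in a..b, (1 + 2 * Real.cos (2 * π * t))
      = (b + Real.sin (2 * π * b) / π) - (a + Real.sin (2 * π * a) / π) := by
  apply intervalIntegral.integral_eq_sub_of_hasDerivAt
    (f := fun t : ℝ => t + Real.sin (2 * π * t) / π)
  · intro t _
    have h : HasDerivAt (fun t : ℝ => 2 * π * t) (2 * π) t := by
      simpa using (hasDerivAt_id t).const_mul (2 * π)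
    refine ((hasDerivAt_id' t).fun_add (h.sin.div_const π)).congr_deriv ?_
    field_simp
  · exact Continuous.intervalIntegrable (by fun_prop) _ _

lemma integral_abs_one_add_two_cos :
    ∫ t in (-(1 / 3) : ℝ)..(2 / 3), |1 + 2 * Real.cos (2 * π * t)|
      = 1 / 3 + 2 * √3 / π := by
  have hc : Continuous fun t : ℝ => |1 + 2 * Real.cos (2 * π * t)| := by fun_prop
  rw [← intervalIntegral.integral_add_adjacent_intervals (b := 1 / 3)
    (hc.intervalIntegrable _ _) (hc.intervalIntegrable _ _)]
  have e₁ : ∫ t in (-(1 / 3) : ℝ)..(1 / 3), |1 + 2 * Real.cos (2 * π * t)|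
      = ∫ t in (-(1 / 3) : ℝ)..(1 / 3), (1 + 2 * Real.cos (2 * π * t)) := by
    apply intervalIntegral.integral_congr
    intro t ht
    rw [Set.uIcc_of_le (by norm_num)] at ht
    exact abs_of_nonneg (one_add_two_cos_nonneg ht.1 ht.2)
  have e₂ : ∫ t in (1 / 3 : ℝ)..(2 / 3), |1 + 2 * Real.cos (2 * π * t)|
      = ∫ t in (1 / 3 : ℝ)..(2 / 3), -(1 + 2 * Real.cos (2 * π * t)) := by
    apply intervalIntegral.integral_congr
    intro t ht
    rw [Set.uIcc_of_le (by norm_num)] at ht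
    exact abs_of_nonpos (one_add_two_cos_nonpos ht.1 ht.2)
  have s₁ : Real.sin (2 * π * (1 / 3)) = √3 / 2 := by
    rw [show 2 * π * (1 / 3) = π - π / 3 by ring, Real.sin_pi_sub, Real.sin_pi_div_three]
  have s₂ : Real.sin (2 * π * (2 / 3)) = -(√3 / 2) := by
    rw [show 2 * π * (2 / 3) = π / 3 + π by ring, Real.sin_add_pi, Real.sin_pi_div_three]
  have s₃ : Real.sin (2 * π * (-(1 / 3))) = -(√3 / 2) := by
    rw [mul_neg, Real.sin_neg, s₁]
  rw [e₁, e₂, intervalIntegral.integral_neg, integral_one_add_two_cos, integral_one_add_two_cos,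
    s₁, s₂, s₃]
  ring

lemma integral_addCircle :
    ∫ t : AddCircle (1 : ℝ), |1 + 2 * (fourier 1 t : ℂ).re| = 1 / 3 + 2 * √3 / π := by
  rw [← AddCircle.intervalIntegral_preimage 1 (-(1 / 3)), ← integral_abs_one_add_two_cos]
  norm_num only
  congr 1
  ext t
  rw [fourier_coe_apply]
  congr 3
  rw [show (2 * π * Complex.I * (1 : ℤ) * t / (1 : ℝ) : ℂ) = ((2 * π * t : ℝ) : ℂ) * Complex.I by
    push_cast; ring, Complex.exp_ofReal_mul_I_re]

/-- The polynomial `f(z) = z₁² + z₁z₂ + z₂²` on `𝕋²` satisfies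
`‖f‖_{H¹(𝕋²)} = ∫_{𝕋²} |f| = 1/3 + 2√3/π`. -/
theorem L1_norm_of_symmetric_quadratic :
    ∫ z : Torus 2, ‖(fourier 1 (z 0)) ^ 2 + fourier 1 (z 0) * fourier 1 (z 1)
        + (fourier 1 (z 1)) ^ 2‖
      = 1 / 3 + 2 * Real.sqrt 3 / Real.pi := by
  simp_rw [norm_quadratic_fourier]
  have h := (volume_preserving_finTwoArrow (AddCircle (1 : ℝ))).integral_comp'
    (fun p : AddCircle (1 : ℝ) × AddCircle (1 : ℝ) =>
      |1 + 2 * (fourier 1 (p.1 - p.2) : ℂ).re|)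
  refine h.trans ?_
  have hc : Continuous fun p : AddCircle (1 : ℝ) × AddCircle (1 : ℝ) =>
      |1 + 2 * (fourier 1 (p.1 - p.2) : ℂ).re| := by fun_prop
  have hi : Integrable (fun p : AddCircle (1 : ℝ) × AddCircle (1 : ℝ) =>
      |1 + 2 * (fourier 1 (p.1 - p.2) : ℂ).re|) (volume.prod volume) :=
    hc.integrable_of_hasCompactSupport (HasCompactSupport.of_compactSpace _)
  rw [Measure.volume_eq_prod, integral_prod _ hi]
  have inner (x : AddCircle (1 : ℝ)) :
      ∫ y : AddCircle (1 : ℝ), |1 + 2 * (fourier 1 (x - y) : ℂ).re| = 1 / 3 + 2 * √3 / π := by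
    rw [integral_sub_left_eq_self
      (fun t : AddCircle (1 : ℝ) => |1 + 2 * (fourier 1 t : ℂ).re|) volume x, integral_addCircle]
  simp_rw [inner]
  simp [measureReal_def, AddCircle.measure_univ]

end
end
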